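/- Let G be a finite group with an irreducible character χ achieving the maximal codegree among all irreducible characters of G, and suppose G is not nilpotent (equivalently G > F(G)). If G is solvable, then ker(χ) is strictly contained in F(G). -/

import Mathlib

open CategoryTheory

/-- The kernel of (the character of) a finite-dimensional complex representation. -/
noncomputable def charKer {G : Type} [Group G] (V : FDRep ℂ G) : Subgroup G :=
  MonoidHom.ker (Representation.asGroupHom V.ρ)

/-- The codegree of a character: `|G : ker χ| / χ(1)`. -/
noncomputable def codeg {G : Type} [Group G] (V : FDRep ℂ G) : ℕ :=
  (charKer V).index / Module.finrank ℂ V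

/-- The set of codegrees of irreducible characters of `G`. -/
def codSet (G : Type) [Group G] : Set ℕ :=
  {n | ∃ V : FDRep ℂ G, Simple V ∧ codeg V = n}

/-- Inner product of class functions on a finite group. -/
noncomputable def innerChar (G : Type) [Group G] (f g : G → ℂ) : ℂ :=
  (∑ᶠ x : G, f x * starRingEnd ℂ (g x)) / Nat.card G

open scoped Classical in
/-- The induced character `θ^G` of a character `θ` of a subgroup `H ≤ G`. -/
noncomputable def indChar {G : Type} [Group G] (H : Subgroup G) (θ : FDRep ℂ ↥H) : G → ℂ :=
  fun g => (∑ᶠ x : G, if h : x * g * x⁻¹ ∈ H then θ.character ⟨x * g * x⁻¹, h⟩ else 0) /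
    Nat.card ↥H

/-! Let `K = ker χ` with `χ` of maximal codegree and let `H < G` be a proper supplement of a normal
subgroup `N ≤ K`. An irreducible constituent `ψ` of the functions `G ⧸ H → V_χ` with sum zero has
degree less than `|G : H| χ(1)`, so `|G : ker ψ| < |G : H| |G : K|` by maximality. As
`ker ψ ≤ H` would force `ker ψ ≤ H ⊓ K`, whose index is `|G : H| |G : K|`, it follows that
`ker ψ` is not contained in `H`. It does not contain `N` either, since `N` acts transitively on
`G ⧸ H` and trivially on `V_χ`.

Let `B / K` be a chief factor, abelian because `G / K` is solvable. By the Frattini argument `B` is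
nilpotent, hence `K < B ≤ F(G)`, if every maximal subgroup `H` contains a normal subgroup `D ≤ B`
of `G` with `B / D` nilpotent. If `K ≤ H`, take `D = K`. Otherwise take `D = core(H) ⊓ K` and pass
to `G / D`: the subgroups `ker ψ` show that `K / D` is an abelian minimal normal subgroup
supplemented by `H / D`, and then that `B / D` centralizes it.
-/

open scoped commutatorElement

section GroupTheory

variable {G G' : Type*} [Group G] [Group G']

/-- `N / K` is a chief factor of `G`: `N` is minimal among the normal subgroups of `G` lying
strictly above `K`. A minimal normal subgroup of `G` is the case `K = ⊥`. -/
def IsChiefFactor (K N : Subgroup G) : Prop :=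
  Minimal (fun X : Subgroup G ↦ X.Normal ∧ K < X) N

theorem exists_isChiefFactor_le [Finite G] {K M : Subgroup G} (hM : M.Normal) (hKM : K < M) :
    ∃ N ≤ M, IsChiefFactor K N :=
  exists_minimal_le_of_wellFoundedLT _ M ⟨hM, hKM⟩

namespace IsChiefFactor

variable {K N X : Subgroup G}

theorem normal (h : IsChiefFactor K N) : N.Normal := h.prop.1

theorem lt (h : IsChiefFactor K N) : K < N := h.prop.2

theorem inf_eq_or_le (h : IsChiefFactor K N) (hX : X.Normal) (hKX : K ≤ X) :
    X ⊓ N = K ∨ N ≤ X := by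
  have := h.normal
  rcases (le_inf hKX h.lt.le).eq_or_lt with hK | hK
  · exact .inl hK.symm
  · exact .inr ((h.le_of_le ⟨inferInstance, hK⟩ inf_le_right).trans inf_le_left)

theorem map {f : G →* G'} (hf : Function.Surjective f) (hK : f.ker ≤ K)
    (h : IsChiefFactor K N) : IsChiefFactor (K.map f) (N.map f) := by
  have comap_map {Y : Subgroup G} (hY : K ≤ Y) : (Y.map f).comap f = Y :=
    Subgroup.comap_map_eq_self (hK.trans hY)
  refine ⟨⟨h.normal.map f hf, ?_⟩, fun Y ⟨hY, hKY⟩ hYN ↦ ?_⟩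
  · rw [← Subgroup.comap_lt_comap_of_surjective hf, comap_map le_rfl, comap_map h.lt.le]
    exact h.lt
  · rw [← Subgroup.comap_lt_comap_of_surjective hf, comap_map le_rfl] at hKY
    rw [← Subgroup.comap_le_comap_of_surjective hf, comap_map h.lt.le] at hYN
    exact Subgroup.map_le_iff_le_comap.2 (h.le_of_le ⟨hY.comap f, hKY⟩ hYN)

theorem commutator_le [K.Normal] (h : IsChiefFactor K N)
    (hs : Group.IsSolvable (N.map (QuotientGroup.mk' K))) : ⁅N, N⁆ ≤ K := by
  have := h.normal
  rcases h.inf_eq_or_le (X := ⁅N, N⁆ ⊔ K) inferInstance le_sup_right with hK | hN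
  · exact (le_inf le_sup_left (Subgroup.commutator_le_left N N)).trans hK.le
  · set N' := N.map (QuotientGroup.mk' K) with hN'
    have : Nontrivial N' := by
      rw [Subgroup.nontrivial_iff_ne_bot, Ne, Subgroup.map_eq_bot_iff, QuotientGroup.ker_mk']
      exact h.lt.not_ge
    have hlt := (Subgroup.map_lt_map_iff_of_injective N'.subtype_injective).2
      (Group.IsSolvable.commutator_lt_top_of_nontrivial N')
    rw [Subgroup.map_subtype_commutator, ← MonoidHom.range_eq_map, N'.range_subtype] at hlt
    refine absurd ?_ hlt.not_ge
    rwa [hN', ← Subgroup.map_commutator, Subgroup.map_le_map_iff, QuotientGroup.ker_mk']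

end IsChiefFactor

section Frattini

variable [Finite G]

theorem normalizer_sylow_sup_eq_top {B M : Subgroup G} [M.Normal] {p : ℕ} [Fact p.Prime]
    (P : Sylow p B) (hPM : (P : Subgroup B).map B.subtype ≤ M) (hMB : M ≤ B) :
    Subgroup.normalizer ((P : Subgroup B).map B.subtype : Set G) ⊔ M = ⊤ := by
  have hP : (P : Subgroup B) ≤ M.subgroupOf B := Subgroup.map_le_iff_le_comap.1 hPM
  let e : M.subgroupOf B →* M := Subgroup.subgroupOfEquivOfLe hMB
  have he : Function.Surjective e := (Subgroup.subgroupOfEquivOfLe hMB).surjective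
  let Q : Sylow p M := (P.subtype hP).mapSurjective he
  have hQ : (Q : Subgroup M).map M.subtype = (P : Subgroup B).map B.subtype :=
    calc (Q : Subgroup M).map M.subtype
        = (((P : Subgroup B).subgroupOf (M.subgroupOf B)).map (M.subgroupOf B).subtype).map
            B.subtype := by
          rw [Sylow.coe_mapSurjective, Sylow.coe_subtype, Subgroup.map_map, Subgroup.map_map]
          rfl
      _ = (P : Subgroup B).map B.subtype := by rw [Subgroup.map_subgroupOf_eq_of_le hP]
  rw [← hQ]
  exact Sylow.normalizer_sup_eq_top Q

theorem sup_normalizer_sylow_eq_top {D B : Subgroup G} [D.Normal] [B.Normal] (hDB : D ≤ B)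
    (hB : Group.IsNilpotent (B.map (QuotientGroup.mk' D))) {p : ℕ} [Fact p.Prime] (P : Sylow p B) :
    D ⊔ Subgroup.normalizer ((P : Subgroup B).map B.subtype : Set G) = ⊤ := by
  set P' := (P : Subgroup B).map B.subtype with hP'
  have hnormal : (P' ⊔ D).Normal := by
    let π := QuotientGroup.mk' D
    let Q := P.mapSurjective (π.subgroupMap_surjective B)
    have := Q.characteristic_of_normal inferInstance
    have : (B.map π).Normal := .map inferInstance π (QuotientGroup.mk'_surjective D)
    have hQ : (Q : Subgroup (B.map π)).map (B.map π).subtype = P'.map π := by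
      rw [Sylow.coe_mapSurjective, Subgroup.map_map, hP', Subgroup.map_map]
      rfl
    have hcomap : (P'.map π).comap π = P' ⊔ D := by
      rw [Subgroup.comap_map_eq, QuotientGroup.ker_mk']
    rw [← hcomap, ← hQ]
    exact ConjAct.normal_of_characteristic_of_normal.comap π
  have h := normalizer_sylow_sup_eq_top (M := P' ⊔ D) P le_sup_left
    (sup_le (Subgroup.map_subtype_le _) hDB)
  rw [eq_top_iff, ← h]
  exact sup_le le_sup_right (sup_le (Subgroup.le_normalizer.trans le_sup_right) le_sup_left)

theorem isNilpotent_of_forall_coatom (B : Subgroup G) [B.Normal]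
    (h : ∀ H : Subgroup G, IsCoatom H → ∃ (D : Subgroup G) (_ : D.Normal), D ≤ B ∧ D ≤ H ∧
      Group.IsNilpotent (B.map (QuotientGroup.mk' D))) : Group.IsNilpotent B := by
  refine ((Group.isNilpotent_of_finite_tfae (G := B)).out 0 3 rfl rfl).2 fun p hp P ↦ ?_
  refine Subgroup.Normal.of_map_subtype (Subgroup.normalizer_eq_top_iff.1 ?_)
  by_contra hP
  obtain ⟨H, hH, hPH⟩ := (eq_top_or_exists_le_coatom _).resolve_left hP
  obtain ⟨D, _, hDB, hDH, hD⟩ := h H hH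
  exact hH.1 (top_le_iff.1 ((sup_normalizer_sylow_eq_top hDB hD P).ge.trans (sup_le hDH hPH)))

end Frattini

theorem le_centralizer_of_inf_eq_bot {L N : Subgroup G} [L.Normal] [N.Normal]
    (h : L ⊓ N = ⊥) : L ≤ Subgroup.centralizer N :=
  Subgroup.commutator_eq_bot_iff_le_centralizer.1
    (Subgroup.commutator_eq_bot_of_disjoint (disjoint_iff.2 h))

theorem isNilpotent_of_le_centralizer {K B : Subgroup G} (hB : B ≤ Subgroup.centralizer K)
    (hBK : ⁅B, B⁆ ≤ K) : Group.IsNilpotent B := by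
  refine Subgroup.isNilpotent_of_ker_le_center (Abelianization.of (G := B)) fun x hx ↦ ?_
  rw [Abelianization.ker_of] at hx
  have hxK : (x : G) ∈ K := by
    apply hBK
    rw [← Subgroup.map_subtype_commutator]
    exact Subgroup.mem_map_of_mem _ hx
  exact Subgroup.mem_center_iff.2 fun b ↦
    Subtype.ext (Subgroup.mem_centralizer_iff.1 (hB b.2) x hxK).symm

/-- The property of the kernel `K` of an irreducible character of maximal codegree on which the
group-theoretic part of the argument rests: every proper supplement `H` of a normal subgroup
`N ≤ K` is witnessed by a normal subgroup `L` of `G` that contains the part of `K` lying in the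
core of `H`, but lies neither above `N` nor inside `H`. -/
def IsSupplementSeparated (K : Subgroup G) : Prop :=
  ∀ ⦃N H : Subgroup G⦄, N.Normal → N ≤ K → N ⊔ H = ⊤ → H ≠ ⊤ →
    ∃ L : Subgroup G, L.Normal ∧ ¬ N ≤ L ∧ ¬ L ≤ H ∧ H.normalCore ⊓ K ≤ L

namespace IsSupplementSeparated

variable {K N : Subgroup G}

theorem map {f : G →* G'} (hf : Function.Surjective f) (hfK : f.ker ≤ K)
    (hK : IsSupplementSeparated K) : IsSupplementSeparated (K.map f) := by
  intro N H hN hNK hNH hH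
  have map_comap (Y : Subgroup G') : (Y.comap f).map f = Y :=
    Subgroup.map_comap_eq_self_of_surjective hf Y
  have hNK' : N.comap f ≤ K := by
    rw [← Subgroup.comap_map_eq_self hfK]
    exact Subgroup.comap_mono hNK
  have hNH' : N.comap f ⊔ H.comap f = ⊤ := by
    rw [Subgroup.comap_sup_eq f N H hf, hNH, Subgroup.comap_top]
  have hH' : H.comap f ≠ ⊤ := fun h ↦ hH <| by
    rw [← map_comap H, h, Subgroup.map_top_of_surjective f hf]
  obtain ⟨L, hL, hNL, hLH, hHL⟩ := hK (hN.comap f) hNK' hNH' hH'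
  have hcore : H.normalCore.comap f ≤ (H.comap f).normalCore :=
    Subgroup.normal_le_normalCore.2 (Subgroup.comap_mono H.normalCore_le)
  have hfL : f.ker ≤ L := (le_inf ((f.ker_le_comap _).trans hcore) hfK).trans hHL
  refine ⟨L.map f, hL.map f hf, fun h ↦ hNL ?_, fun h ↦ hLH (Subgroup.map_le_iff_le_comap.1 h), ?_⟩
  · rw [← Subgroup.comap_map_eq_self hfL]
    exact Subgroup.comap_mono h
  · rw [← map_comap (H.normalCore ⊓ K.map f), Subgroup.comap_inf, Subgroup.comap_map_eq_self hfK]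
    exact Subgroup.map_mono ((inf_le_inf_right K hcore).trans hHL)

theorem ne_top [Finite G] [Nontrivial G] (hK : IsSupplementSeparated K) : K ≠ ⊤ := by
  rintro rfl
  obtain ⟨M, -, hM⟩ := exists_maximal_ge_of_wellFoundedGT
    (fun M : Subgroup G ↦ M.Normal ∧ M ≠ ⊤) ⊥ ⟨inferInstance, bot_ne_top⟩
  have := hM.prop.1
  obtain ⟨L, hL, hLtop, hLM, hML⟩ :=
    hK (N := ⊤) (H := M) inferInstance le_rfl (top_sup_eq M) hM.prop.2
  rw [M.normalCore_eq_self, inf_top_eq] at hML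
  exact hLM (hM.le_of_ge ⟨hL, fun h ↦ hLtop h.ge⟩ hML)

theorem isNilpotent [Finite G] (hK : IsSupplementSeparated K) (hN : IsChiefFactor ⊥ N)
    (hNK : N ≤ K) : Group.IsNilpotent N := by
  have := hN.normal
  refine ((Group.isNilpotent_of_finite_tfae (G := N)).out 0 3 rfl rfl).2 fun p hp P ↦ ?_
  set P' := (P : Subgroup N).map N.subtype
  refine Subgroup.Normal.of_map_subtype (Subgroup.normalizer_eq_top_iff.1 ?_)
  by_contra hP
  have hsup : N ⊔ Subgroup.normalizer (P' : Set G) = ⊤ := by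
    rw [sup_comm]
    exact normalizer_sylow_sup_eq_top P (Subgroup.map_subtype_le _) le_rfl
  obtain ⟨L, hL, hNL, hLH, -⟩ := hK hN.normal hNK hsup hP
  have hLN : L ⊓ N = ⊥ := (hN.inf_eq_or_le hL bot_le).resolve_right hNL
  exact hLH <| calc L ≤ Subgroup.centralizer N := le_centralizer_of_inf_eq_bot hLN
    _ ≤ Subgroup.centralizer P' := Subgroup.centralizer_le (Subgroup.map_subtype_le _)
    _ ≤ Subgroup.normalizer P' := Subgroup.centralizer_le_normalizer _

end IsSupplementSeparated

section Supplement

variable {K B H N L D : Subgroup G}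

theorem sup_inf_le_sup_inf_of_le [N.Normal] (hNK : N ≤ K) : (N ⊔ H) ⊓ K ≤ N ⊔ H ⊓ K := by
  rw [← SetLike.coe_subset_coe, Subgroup.coe_inf, Subgroup.normal_mul, Subgroup.normal_mul,
    Subgroup.mul_inf_assoc N H K hNK]

theorem normal_inf_of_le_centralizer [K.Normal] [N.Normal]
    (hKN : K ≤ Subgroup.centralizer N) (hNH : N ⊔ H = ⊤) : (H ⊓ K).Normal := by
  rw [← Subgroup.normalizer_eq_top_iff, eq_top_iff, ← hNH]
  refine sup_le ?_ ?_
  · have hN : N ≤ Subgroup.centralizer (H ⊓ K : Subgroup G) :=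
      Subgroup.le_centralizer_iff.1 (inf_le_right.trans hKN)
    exact hN.trans (Subgroup.centralizer_le_normalizer _)
  · calc H ≤ Subgroup.normalizer H ⊓ Subgroup.normalizer K :=
          le_inf Subgroup.le_normalizer Subgroup.le_normalizer_of_normal
      _ ≤ Subgroup.normalizer (H ⊓ K : Subgroup G) := Subgroup.inf_normalizer_le_normalizer_inf

theorem le_sup_normalCore_inf [K.Normal] [N.Normal] (hNK : N ≤ K)
    (hKN : K ≤ Subgroup.centralizer N) (hNH : N ⊔ H = ⊤) : K ≤ N ⊔ H.normalCore ⊓ K := by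
  have := normal_inf_of_le_centralizer hKN hNH
  calc K = (N ⊔ H) ⊓ K := by rw [hNH, top_inf_eq]
    _ ≤ N ⊔ H ⊓ K := sup_inf_le_sup_inf_of_le hNK
    _ ≤ N ⊔ H.normalCore ⊓ K :=
      sup_le_sup_left (le_inf (Subgroup.normal_le_normalCore.2 inf_le_left) inf_le_right) N

theorem IsChiefFactor.le_sup_normalCore (hN : IsChiefFactor ⊥ N)
    (hNN : N ≤ Subgroup.centralizer N) (hNH : N ⊔ H = ⊤) [L.Normal]
    (hLN : L ≤ Subgroup.centralizer N) (hLH : ¬ L ≤ H) : N ≤ L ⊔ H.normalCore := by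
  have := hN.normal
  refine (hN.inf_eq_or_le (X := L ⊔ H.normalCore) inferInstance bot_le).resolve_left fun h ↦ hLH ?_
  have hL : L ≤ H.normalCore ⊔ N := by
    rw [sup_comm]
    exact hLN.trans ((le_sup_normalCore_inf hNN le_rfl hNH).trans (sup_le_sup_left inf_le_left N))
  calc L ≤ (H.normalCore ⊔ N) ⊓ (L ⊔ H.normalCore) := le_inf hL le_sup_left
    _ ≤ H.normalCore ⊔ N ⊓ (L ⊔ H.normalCore) := sup_inf_le_sup_inf_of_le le_sup_right
    _ = H.normalCore := by rw [inf_comm, h, sup_bot_eq]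
    _ ≤ H := H.normalCore_le

theorem IsChiefFactor.le_centralizer_or_le_centralizer [K.Normal] (hB : IsChiefFactor K B)
    (hK : K ≤ Subgroup.centralizer K) [D.Normal] (hDK : D ⊓ K = ⊥) :
    B ≤ Subgroup.centralizer K ∨ D ≤ Subgroup.centralizer B := by
  have := hB.normal
  rcases hB.inf_eq_or_le (X := D ⊔ K) inferInstance le_sup_right with h | h
  · refine .inr (le_centralizer_of_inf_eq_bot (eq_bot_iff.2 ?_))
    rw [← hDK]
    exact le_inf inf_le_left ((inf_le_inf_right B le_sup_left).trans h.le)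
  · exact .inl (h.trans (sup_le (le_centralizer_of_inf_eq_bot hDK) hK))

theorem IsChiefFactor.eq_of_normalCore_inf_eq_bot [K.Normal] (hN : IsChiefFactor ⊥ N)
    (hNK : N ≤ K) (hNN : N ≤ Subgroup.centralizer N) (hNH : N ⊔ H = ⊤)
    (hcore : H.normalCore ⊓ K = ⊥) [L.Normal] (hNL : ¬ N ≤ L) (hLH : ¬ L ≤ H) :
    L ⊓ K = ⊥ ∧ K = N := by
  have := hN.normal
  have hLN : L ⊓ N = ⊥ := (hN.inf_eq_or_le ‹_› bot_le).resolve_right hNL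
  have hCK : Subgroup.centralizer N ⊓ K ≤ N := by
    have h := le_sup_normalCore_inf (K := Subgroup.centralizer N ⊓ K) (le_inf hNN hNK)
      inf_le_left hNH
    rwa [inf_left_comm, hcore, inf_bot_eq, sup_bot_eq] at h
  have hLC : L ≤ Subgroup.centralizer N := le_centralizer_of_inf_eq_bot hLN
  have hLK : L ⊓ K = ⊥ := by
    rw [eq_bot_iff, ← hLN]
    exact le_inf inf_le_left ((inf_le_inf_right K hLC).trans hCK)
  have hNC : N ≤ Subgroup.centralizer K :=
    (hN.le_sup_normalCore hNN hNH hLC hLH).trans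
      (sup_le (le_centralizer_of_inf_eq_bot hLK) (le_centralizer_of_inf_eq_bot hcore))
  exact ⟨hLK, hNK.antisymm' ((le_inf (Subgroup.le_centralizer_iff.1 hNC) le_rfl).trans hCK)⟩

end Supplement

theorem IsSupplementSeparated.le_centralizer [Finite G] {K B H : Subgroup G} [K.Normal]
    (hK : IsSupplementSeparated K) (hB : IsChiefFactor K B) (hH : IsCoatom H) (hKH : ¬ K ≤ H)
    (hcore : H.normalCore ⊓ K = ⊥) : B ≤ Subgroup.centralizer K := by
  have hbot : ⊥ < K := bot_lt_iff_ne_bot.2 fun h ↦ hKH (h ▸ bot_le)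
  obtain ⟨N, hNK, hN⟩ := exists_isChiefFactor_le ‹_› hbot
  have := hN.normal
  have hNH : ¬ N ≤ H := fun h ↦ hN.lt.not_ge <| by
    rw [← hcore]
    exact le_inf (Subgroup.normal_le_normalCore.2 h) hNK
  have hsup : N ⊔ H = ⊤ := hH.2 _ (right_lt_sup.2 hNH)
  obtain ⟨L, hL, hNL, hLH, -⟩ := hK hN.normal hNK hsup hH.1
  have hNN : N ≤ Subgroup.centralizer N := by
    have := hK.isNilpotent hN hNK
    rw [← Subgroup.commutator_eq_bot_iff_le_centralizer, ← le_bot_iff]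
    exact hN.commutator_le
      (Group.isSolvable_of_surjective ((QuotientGroup.mk' ⊥).subgroupMap_surjective N))
  obtain ⟨hLK, rfl⟩ := hN.eq_of_normalCore_inf_eq_bot hNK hNN hsup hcore hNL hLH
  rcases hB.le_centralizer_or_le_centralizer hNN hLK with h | hLB
  · exact h
  rcases hB.le_centralizer_or_le_centralizer hNN hcore with h | hHB
  · exact h
  rw [Subgroup.le_centralizer_iff]
  exact (hN.le_sup_normalCore hNN hsup (le_centralizer_of_inf_eq_bot hLK) hLH).trans
    (sup_le hLB hHB)

theorem isCoatom_map_of_ker_le {f : G →* G'} (hf : Function.Surjective f) {H : Subgroup G}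
    (hH : IsCoatom H) (hfH : f.ker ≤ H) : IsCoatom (H.map f) := by
  refine ⟨fun h ↦ hH.1 ?_, fun Y hY ↦ ?_⟩
  · rw [← Subgroup.comap_map_eq_self hfH, h, Subgroup.comap_top]
  · rw [← Subgroup.comap_lt_comap_of_surjective hf, Subgroup.comap_map_eq_self hfH] at hY
    rw [← Subgroup.map_comap_eq_self_of_surjective hf Y, hH.2 _ hY,
      Subgroup.map_top_of_surjective f hf]

theorem normalCore_map_inf_map_eq_bot {f : G →* G'} (hf : Function.Surjective f)
    {H K : Subgroup G} (hker : f.ker = H.normalCore ⊓ K) :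
    (H.map f).normalCore ⊓ K.map f = ⊥ := by
  have hfH : f.ker ≤ H := hker.trans_le (inf_le_left.trans H.normalCore_le)
  have hfK : f.ker ≤ K := hker.trans_le inf_le_right
  have hcore : (H.map f).normalCore.comap f ≤ H.normalCore := by
    rw [Subgroup.normal_le_normalCore]
    exact (Subgroup.comap_mono (Subgroup.normalCore_le _)).trans_eq (Subgroup.comap_map_eq_self hfH)
  rw [← Subgroup.map_comap_eq_self_of_surjective hf ((H.map f).normalCore ⊓ K.map f),
    Subgroup.map_eq_bot_iff, Subgroup.comap_inf, Subgroup.comap_map_eq_self hfK, hker]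
  exact inf_le_inf_right K hcore

theorem IsSupplementSeparated.map_le_centralizer_map [Finite G'] {f : G →* G'}
    (hf : Function.Surjective f) {K B H : Subgroup G} [K.Normal] (hK : IsSupplementSeparated K)
    (hB : IsChiefFactor K B) (hH : IsCoatom H) (hKH : ¬ K ≤ H)
    (hker : f.ker = H.normalCore ⊓ K) : B.map f ≤ Subgroup.centralizer (K.map f) := by
  have hfH : f.ker ≤ H := hker.trans_le (inf_le_left.trans H.normalCore_le)
  have hfK : f.ker ≤ K := hker.trans_le inf_le_right
  have : (K.map f).Normal := .map ‹_› f hf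
  refine (hK.map hf hfK).le_centralizer (hB.map hf hfK) (isCoatom_map_of_ker_le hf hH hfH) ?_
    (normalCore_map_inf_map_eq_bot hf hker)
  rwa [Subgroup.map_le_map_iff, sup_eq_left.2 hfH]

theorem IsSupplementSeparated.isNilpotent_of_isChiefFactor [Finite G] {K B : Subgroup G} [K.Normal]
    (hK : IsSupplementSeparated K) (hB : IsChiefFactor K B) (hBK : ⁅B, B⁆ ≤ K) :
    Group.IsNilpotent B := by
  have := hB.normal
  refine isNilpotent_of_forall_coatom B fun H hH ↦ ?_
  by_cases hKH : K ≤ H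
  · refine ⟨K, ‹_›, hB.lt.le, hKH, isNilpotent_of_le_centralizer (K := ⊥) ?_ ?_⟩
    · rw [Subgroup.le_centralizer_iff]
      exact bot_le
    · rwa [← Subgroup.map_commutator, le_bot_iff, Subgroup.map_eq_bot_iff, QuotientGroup.ker_mk']
  · set D := H.normalCore ⊓ K
    refine ⟨D, inferInstance, inf_le_right.trans hB.lt.le, inf_le_left.trans H.normalCore_le,
      isNilpotent_of_le_centralizer (hK.map_le_centralizer_map (QuotientGroup.mk'_surjective D)
        hB hH hKH (QuotientGroup.ker_mk' D)) ?_⟩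
    rw [← Subgroup.map_commutator]
    exact Subgroup.map_mono hBK

theorem IsSupplementSeparated.lt_of_isGreatest [Finite G] [Nontrivial G] {K F : Subgroup G}
    [K.Normal] (hK : IsSupplementSeparated K) [Group.IsSolvable (G ⧸ K)]
    (hF : IsGreatest {N : Subgroup G | N.Normal ∧ Group.IsNilpotent N} F) : K < F := by
  obtain ⟨B, -, hB⟩ := exists_isChiefFactor_le inferInstance hK.ne_top.lt_top
  exact hB.lt.trans_le
    (hF.2 ⟨hB.normal, hK.isNilpotent_of_isChiefFactor hB (hB.commutator_le inferInstance)⟩)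

end GroupTheory

section Index

variable {G : Type*} [Group G]

theorem index_inf_of_sup_eq_top {H K : Subgroup G} [K.Normal] (h : H ⊔ K = ⊤) :
    (H ⊓ K).index = H.index * K.index := by
  rw [← Subgroup.relIndex_mul_index (inf_le_left : H ⊓ K ≤ H), Subgroup.inf_relIndex_left,
    ← Subgroup.relIndex_sup_right H K, h, Subgroup.relIndex_top_right, mul_comm]

theorem exists_mem_smul_eq_of_sup_eq_top {N H : Subgroup G} [N.Normal] (h : N ⊔ H = ⊤)
    (x y : G ⧸ H) : ∃ n ∈ N, n • x = y := by
  induction x using QuotientGroup.induction_on with | H a => ?_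
  induction y using QuotientGroup.induction_on with | H b => ?_
  obtain ⟨n, hn, c, hc, hnc⟩ := Subgroup.mem_sup_of_normal_left.1 (h ▸ trivial : a⁻¹ * b ∈ N ⊔ H)
  refine ⟨a * n * a⁻¹, Subgroup.Normal.conj_mem ‹_› n hn a, QuotientGroup.eq.2 ?_⟩
  have hab : (a * n * a⁻¹ * a)⁻¹ * b = c := by
    rw [inv_mul_cancel_right, mul_inv_rev, mul_assoc, ← hnc, inv_mul_cancel_left]
  exact hab ▸ hc

end Index

section Irreducible

variable {k G G' V : Type*} [Field k] [Monoid G] [Monoid G'] [AddCommGroup V] [Module k V]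

theorem nontrivial_of_isIrreducible (ρ : Representation k G V) [ρ.IsIrreducible] :
    Nontrivial V := by
  by_contra hV
  rw [not_nontrivial_iff_subsingleton] at hV
  exact bot_ne_top (α := Subrepresentation ρ)
    (Subrepresentation.toSubmodule_injective (Subsingleton.elim _ _))

theorem isIrreducible_of_forall_eq_bot_or_eq_top [Nontrivial V] {ρ : Representation k G V}
    (h : ∀ S : Subrepresentation ρ, S.toSubmodule = ⊥ ∨ S.toSubmodule = ⊤) :
    ρ.IsIrreducible where
  exists_pair_ne := ⟨⊥, ⊤, fun h ↦ bot_ne_top (congrArg Subrepresentation.toSubmodule h)⟩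
  eq_bot_or_eq_top S := (h S).imp (fun h ↦ Subrepresentation.toSubmodule_injective h)
    fun h ↦ Subrepresentation.toSubmodule_injective h

theorem isIrreducible_of_comp (f : G →* G') (σ : Representation k G' V)
    [Representation.IsIrreducible (σ.comp f)] : σ.IsIrreducible := by
  have := nontrivial_of_isIrreducible (σ.comp f)
  refine isIrreducible_of_forall_eq_bot_or_eq_top fun S ↦ ?_
  let S' : Subrepresentation (σ.comp f) := ⟨S.toSubmodule, fun g ↦ S.apply_mem_toSubmodule (f g)⟩
  exact (eq_bot_or_eq_top S').imp (congrArg Subrepresentation.toSubmodule)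
    (congrArg Subrepresentation.toSubmodule)

theorem exists_isIrreducible_le [FiniteDimensional k V] {ρ : Representation k G V}
    {A : Subrepresentation ρ} (hA : A ≠ ⊥) : ∃ S ≤ A, S.toRepresentation.IsIrreducible := by
  have : WellFoundedLT (Subrepresentation ρ) :=
    StrictMono.wellFoundedLT (f := Subrepresentation.toSubmodule) fun _ _ h ↦ h
  obtain ⟨S, hS, hSA⟩ := (eq_bot_or_exists_atom_le A).resolve_left hA
  have : Nontrivial S.toSubmodule :=
    (Submodule.nontrivial_iff_ne_bot).2 fun h ↦ hS.1 (Subrepresentation.toSubmodule_injective h)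
  refine ⟨S, hSA, isIrreducible_of_forall_eq_bot_or_eq_top fun T ↦ ?_⟩
  let T' : Subrepresentation ρ := ⟨T.toSubmodule.map S.toSubmodule.subtype, by
    rintro g _ ⟨w, hw, rfl⟩
    exact ⟨S.toRepresentation g w, T.apply_mem_toSubmodule g hw, rfl⟩⟩
  have hinj := Submodule.map_injective_of_injective S.toSubmodule.injective_subtype
  have hT' : T' ≤ S := Submodule.map_subtype_le _ _
  refine (hS.le_iff.1 hT').imp (fun h ↦ hinj ?_) fun h ↦ hinj ?_
  · exact (congrArg Subrepresentation.toSubmodule h).trans (Submodule.map_bot _).symm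
  · exact (congrArg Subrepresentation.toSubmodule h).trans (Submodule.map_subtype_top _).symm

end Irreducible

section Degree

theorem dvd_of_isIntegral_of_mul_eq {k : Type*} [Field k] [CharZero k] {c : k}
    (hc : IsIntegral ℤ c) {d n : ℕ} (hd : d ≠ 0) (h : c * d = n) : d ∣ n := by
  have hd' : (d : ℚ) ≠ 0 := Nat.cast_ne_zero.2 hd
  have hc' : c = algebraMap ℚ k (n / d) := by
    rw [map_div₀, map_natCast, map_natCast, ← h, mul_div_cancel_right₀ _ (Nat.cast_ne_zero.2 hd)]
  rw [hc', isIntegral_algebraMap_iff (algebraMap ℚ k).injective,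
    IsIntegrallyClosed.isIntegral_iff] at hc
  obtain ⟨m, hm⟩ := hc
  rw [eq_div_iff hd', eq_intCast] at hm
  have hmn : (n : ℤ) = d * m := by
    rw [mul_comm]
    exact_mod_cast hm.symm
  exact Int.natCast_dvd_natCast.1 ⟨m, hmn⟩

theorem isIntegral_sum_smul {k M A : Type*} [Field k] [Monoid M] [Fintype M] [Ring A] [Algebra k A]
    (φ : M →* A) {f : M → k} (hf : ∀ g, IsIntegral ℤ (f g)) :
    IsIntegral ℤ (∑ g, f g • φ g) := by
  let R := integralClosure ℤ k
  have hlift : MonoidAlgebra.lift R A M φ (∑ g, MonoidAlgebra.single g ⟨f g, hf g⟩) =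
      ∑ g, f g • φ g := by
    simp only [map_sum, MonoidAlgebra.lift_single]
    rfl
  have hR : IsIntegral R (∑ g, f g • φ g) := hlift ▸ (IsIntegral.of_finite R _).map _
  exact isIntegral_trans (A := R) _ hR

theorem isIntegral_trace {k V : Type*} [Field k] [IsAlgClosed k] [AddCommGroup V] [Module k V]
    [FiniteDimensional k V] {f : Module.End k V} (hf : IsIntegral ℤ f) :
    IsIntegral ℤ (LinearMap.trace k V f) := by
  rw [Module.End.trace_eq_sum_roots_charpoly_of_splits (IsAlgClosed.splits _)]
  refine IsIntegral.multiset_sum fun μ hμ ↦ ?_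
  obtain ⟨v, hv⟩ := ((Module.End.hasEigenvalue_iff_isRoot_charpoly f μ).2
    (Polynomial.mem_roots'.1 hμ).2).exists_hasEigenvector
  obtain ⟨p, hp, hpf⟩ := hf
  have hpμ : p.aeval μ • v = 0 := by
    rw [← Polynomial.aeval_map_algebraMap k, Polynomial.coe_aeval_eq_eval,
      ← Module.End.aeval_apply_of_hasEigenvector hv, Polynomial.aeval_map_algebraMap,
      Polynomial.aeval_def, hpf, LinearMap.zero_apply]
  exact ⟨p, hp, (smul_eq_zero.1 hpμ).resolve_right hv.2⟩

variable {k G V : Type*} [Field k] [IsAlgClosed k] [Group G] [AddCommGroup V] [Module k V]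
  [FiniteDimensional k V] (ρ : Representation k G V)

theorem isIntegral_character [Finite G] (g : G) : IsIntegral ℤ (ρ.character g) :=
  isIntegral_trace <| .of_pow (orderOf_pos g) <| by
    rw [← map_pow, pow_orderOf_eq_one, map_one]
    exact isIntegral_one

theorem exists_sum_smul_eq_smul_one [Fintype G] [ρ.IsIrreducible] {f : G → k}
    (hf : ∀ g h, f (h * g * h⁻¹) = f g) : ∃ c : k, ∑ g, f g • ρ g = c • 1 := by
  have hcomm (x : G) : (∑ g, f g • ρ g) * ρ x = ρ x * ∑ g, f g • ρ g := by
    simp only [Finset.sum_mul, Finset.mul_sum, smul_mul_assoc, mul_smul_comm, ← map_mul]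
    refine Fintype.sum_equiv (MulAut.conj x⁻¹).toEquiv _ _ fun g ↦ ?_
    rw [MulEquiv.toEquiv_eq_coe, EquivLike.coe_coe, MulAut.conj_apply, hf]
    congr 2
    group
  let T : Representation.IntertwiningMap ρ ρ := ⟨∑ g, f g • ρ g, hcomm⟩
  obtain ⟨c, hc⟩ :=
    (Representation.IsIrreducible.algebraMap_intertwiningMap_bijective_of_isAlgClosed (ρ := ρ)).2 T
  exact ⟨c, (congrArg Representation.IntertwiningMap.toLinearMap hc).symm⟩

variable [CharZero k]

theorem sum_character_mul_character_inv [Fintype G] [ρ.IsIrreducible] :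
    ∑ g, ρ.character g * ρ.character g⁻¹ = Nat.card G := by
  have hcard : (Nat.card G : k) ≠ 0 := Nat.cast_ne_zero.2 Nat.card_pos.ne'
  have := invertibleOfNonzero hcard
  have h := Representation.char_orthonormal ρ ρ
  rw [if_pos ⟨.refl ρ⟩, inv_mul_eq_one₀ hcard] at h
  exact h.symm

theorem finrank_dvd_card [Finite G] [ρ.IsIrreducible] : Module.finrank k V ∣ Nat.card G := by
  have := Fintype.ofFinite G
  have := nontrivial_of_isIrreducible ρ
  have hconj (g h : G) : ρ.character (h * g * h⁻¹)⁻¹ = ρ.character g⁻¹ := by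
    rw [← ρ.char_conj g⁻¹ h]
    group
  obtain ⟨c, hc⟩ := exists_sum_smul_eq_smul_one ρ (f := fun g ↦ ρ.character g⁻¹) hconj
  have hint : IsIntegral ℤ c := by
    have h := isIntegral_sum_smul ρ fun g ↦ isIntegral_character ρ g⁻¹
    rw [hc, ← Algebra.algebraMap_eq_smul_one] at h
    exact (isIntegral_algebraMap_iff (FaithfulSMul.algebraMap_injective k _)).1 h
  refine dvd_of_isIntegral_of_mul_eq hint Module.finrank_pos.ne' ?_
  calc c * Module.finrank k V = LinearMap.trace k V (c • 1) := by simp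
    _ = ∑ g, ρ.character g * ρ.character g⁻¹ := by
      rw [← hc, map_sum]
      exact Finset.sum_congr rfl fun g _ ↦ by rw [map_smul, smul_eq_mul, mul_comm]; rfl
    _ = Nat.card G := sum_character_mul_character_inv ρ

theorem finrank_dvd_index_ker [Finite G] [ρ.IsIrreducible] :
    Module.finrank k V ∣ ρ.ker.index := by
  let σ : Representation k (G ⧸ ρ.ker) V := QuotientGroup.lift ρ.ker ρ le_rfl
  have : Representation.IsIrreducible (σ.comp (QuotientGroup.mk' ρ.ker)) := ‹_›
  have := isIrreducible_of_comp (QuotientGroup.mk' ρ.ker) σ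
  exact finrank_dvd_card σ

end Degree

section Simple

universe u v

variable {k : Type u} {G : Type v} [Field k]

theorem isIrreducible_of_simple [Monoid G] (V : FDRep k G) [Simple V] :
    Representation.IsIrreducible V.ρ := by
  have : Nontrivial V := by
    by_contra hV
    rw [not_nontrivial_iff_subsingleton] at hV
    exact id_nonzero V (by ext v; exact Subsingleton.elim (α := V) _ _)
  refine isIrreducible_of_forall_eq_bot_or_eq_top fun S ↦ ?_
  let ι : FDRep.of S.toRepresentation ⟶ V :=
    ⟨FGModuleCat.ofHom S.toSubmodule.subtype, fun g ↦ by ext v; rfl⟩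
  have : Mono ((forget _).map ι) := (mono_iff_injective _).2 Subtype.val_injective
  have : Mono ι := (forget _).mono_of_mono_map this
  by_cases hι : ι = 0
  · refine .inl (eq_bot_iff.2 fun v hv ↦ ?_)
    have : ι.hom.hom.hom ⟨v, hv⟩ = 0 := by rw [hι]; rfl
    exact this
  · have : IsIso ι := isIso_of_mono_of_nonzero hι
    refine .inr (eq_top_iff.2 fun v _ ↦ ?_)
    have hv : ι.hom.hom.hom ((inv ι).hom.hom.hom v) = v :=
      congrArg (fun f : V ⟶ V ↦ f.hom.hom.hom v) (IsIso.inv_hom_id ι)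
    exact hv ▸ Subtype.prop ((inv ι).hom.hom.hom v : S.toSubmodule)

end Simple

section FunctionRep

variable {k G V : Type*} [Field k] [Group G] [AddCommGroup V] [Module k V]
  (ρ : Representation k G V) (X : Type*) [MulAction G X]

/-- The representation of `G` on functions `X → V` by `(g • f) x = ρ g (f (g⁻¹ • x))`; for
`X = G ⧸ H` it is the representation induced from the restriction of `ρ` to `H`. -/
def functionRep : Representation k G (X → V) where
  toFun g := (ρ g).compLeft X ∘ₗ LinearMap.funLeft k V (g⁻¹ • ·)
  map_one' := by ext; simp
  map_mul' g g' := LinearMap.ext fun f ↦ funext fun x ↦ by simp [mul_smul]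

@[simp]
theorem functionRep_apply (g : G) (f : X → V) (x : X) :
    functionRep ρ X g f x = ρ g (f (g⁻¹ • x)) := rfl

/-- The subrepresentation of `functionRep ρ X` of the functions with sum zero. -/
def zeroSum [Fintype X] : Subrepresentation (functionRep ρ X) where
  toSubmodule := LinearMap.ker (∑ x, LinearMap.proj x : (X → V) →ₗ[k] V)
  apply_mem_toSubmodule g f hf := by
    simp only [LinearMap.mem_ker, LinearMap.sum_apply, LinearMap.proj_apply,
      functionRep_apply] at hf ⊢
    have hperm : ∑ x, f (g⁻¹ • x) = ∑ x, f x := Equiv.sum_comp (MulAction.toPerm g⁻¹) f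
    rw [← map_sum, hperm, hf, map_zero]

variable {ρ X}

theorem mem_zeroSum [Fintype X] {f : X → V} : f ∈ zeroSum ρ X ↔ ∑ x, f x = 0 := by
  change _ ∈ LinearMap.ker _ ↔ _
  simp

theorem finrank_zeroSum_add [Fintype X] [Nonempty X] [FiniteDimensional k V] :
    Module.finrank k (zeroSum ρ X).toSubmodule + Module.finrank k V =
      Fintype.card X * Module.finrank k V := by
  classical
  have hsurj : Function.Surjective (∑ x, LinearMap.proj x : (X → V) →ₗ[k] V) := fun v ↦
    ⟨Pi.single (Classical.arbitrary X) v, by simp⟩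
  have h := LinearMap.finrank_range_add_finrank_ker (∑ x, LinearMap.proj x : (X → V) →ₗ[k] V)
  rwa [LinearMap.range_eq_top.2 hsurj, finrank_top, Module.finrank_pi_fintype, add_comm,
    Finset.sum_const, Finset.card_univ, smul_eq_mul] at h

theorem zeroSum_ne_bot [Fintype X] [Nontrivial X] [FiniteDimensional k V] [Nontrivial V] :
    zeroSum ρ X ≠ ⊥ := by
  intro h
  have hsum := finrank_zeroSum_add (ρ := ρ) (X := X)
  rw [h, show (⊥ : Subrepresentation (functionRep ρ X)).toSubmodule = ⊥ from rfl, finrank_bot,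
    zero_add] at hsum
  have hlt := Nat.mul_lt_mul_of_pos_right (Fintype.one_lt_card (α := X))
    (Module.finrank_pos (R := k) (M := V))
  rw [← hsum, one_mul] at hlt
  exact hlt.false

theorem finrank_lt_of_le_zeroSum [Fintype X] [Nonempty X] [FiniteDimensional k V] [Nontrivial V]
    {S : Subrepresentation (functionRep ρ X)} (hS : S ≤ zeroSum ρ X) :
    Module.finrank k S.toSubmodule < Fintype.card X * Module.finrank k V := by
  rw [← finrank_zeroSum_add (ρ := ρ)]
  exact lt_add_of_le_of_pos (Submodule.finrank_mono hS) Module.finrank_pos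

theorem eq_zero_of_mem_zeroSum [CharZero k] [Fintype X] {N : Subgroup G} (hN : N ≤ ρ.ker)
    (hNX : ∀ x y : X, ∃ n ∈ N, n • x = y) {f : X → V} (hf : f ∈ zeroSum ρ X)
    (hNf : ∀ n ∈ N, functionRep ρ X n f = f) : f = 0 := by
  have hconst (x y : X) : f x = f y := by
    obtain ⟨n, hn, rfl⟩ := hNX y x
    nth_rw 1 [← hNf n hn]
    rw [functionRep_apply, MonoidHom.mem_ker.1 (hN hn), Module.End.one_apply, inv_smul_smul]
  funext x
  have hcard : (Fintype.card X : k) ≠ 0 := Nat.cast_ne_zero.2 (Fintype.card_pos_iff.2 ⟨x⟩).ne'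
  have hsum : (Fintype.card X : k) • f x = 0 := by
    rw [← mem_zeroSum.1 hf, Nat.cast_smul_eq_nsmul, ← Finset.card_univ, ← Finset.sum_const]
    exact Finset.sum_congr rfl fun y _ ↦ hconst x y
  exact (smul_eq_zero.1 hsum).resolve_left hcard

theorem le_ker_of_isIrreducible_of_apply_eq [ρ.IsIrreducible] {L : Subgroup G} [L.Normal] {v : V}
    (hv : v ≠ 0) (hLv : ∀ l ∈ L, ρ l v = v) : L ≤ ρ.ker := by
  let S : Subrepresentation ρ :=
    ⟨Representation.invariants (ρ.comp L.subtype), Representation.le_comap_invariants ρ L⟩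
  have hvS : v ∈ S := fun l ↦ hLv l l.2
  have hS : S = ⊤ := (eq_bot_or_eq_top S).resolve_left fun h ↦ hv (by rw [h] at hvS; exact hvS)
  intro l hl
  refine LinearMap.ext fun w ↦ ?_
  have hw : w ∈ S := hS ▸ trivial
  exact hw ⟨l, hl⟩

variable (S : Subrepresentation (functionRep ρ X))

theorem ker_toPermHom_inf_ker_le_ker_toRepresentation :
    (MulAction.toPermHom G X).ker ⊓ ρ.ker ≤ S.toRepresentation.ker := by
  rintro g ⟨hgX, hgρ⟩
  refine LinearMap.ext fun f ↦ Subtype.ext (funext fun x ↦ ?_)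
  have hx : g⁻¹ • x = x := DFunLike.congr_fun ((MulAction.toPermHom G X).ker.inv_mem hgX) x
  change ρ g (f.1 (g⁻¹ • x)) = f.1 x
  rw [MonoidHom.mem_ker.1 hgρ, hx, Module.End.one_apply]

variable {S}

theorem functionRep_eq_of_mem_ker_toRepresentation {g : G} (hg : g ∈ S.toRepresentation.ker)
    {f : X → V} (hf : f ∈ S) : functionRep ρ X g f = f :=
  congrArg Subtype.val (LinearMap.congr_fun (MonoidHom.mem_ker.1 hg) ⟨f, hf⟩)

theorem not_le_ker_toRepresentation_of_le_zeroSum [CharZero k] [Fintype X]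
    [Nontrivial S.toSubmodule] (hS : S ≤ zeroSum ρ X) {N : Subgroup G} (hN : N ≤ ρ.ker)
    (hNX : ∀ x y : X, ∃ n ∈ N, n • x = y) : ¬ N ≤ S.toRepresentation.ker := by
  intro hNS
  obtain ⟨f, hf⟩ := exists_ne (0 : S.toSubmodule)
  exact hf <| Subtype.ext <| eq_zero_of_mem_zeroSum hN hNX (hS f.2) fun n hn ↦
    functionRep_eq_of_mem_ker_toRepresentation (hNS hn) f.2

theorem ker_toRepresentation_le_ker [ρ.IsIrreducible] [Nontrivial S.toSubmodule]
    (hSX : S.toRepresentation.ker ≤ (MulAction.toPermHom G X).ker) :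
    S.toRepresentation.ker ≤ ρ.ker := by
  obtain ⟨f, hf⟩ := exists_ne (0 : S.toSubmodule)
  obtain ⟨x, hx⟩ := Function.ne_iff.1 (Subtype.coe_ne_coe.2 hf)
  refine le_ker_of_isIrreducible_of_apply_eq hx fun g hg ↦ ?_
  have hgx : g⁻¹ • x = x := DFunLike.congr_fun (hSX (inv_mem hg)) x
  simpa only [functionRep_apply, hgx] using
    congrFun (functionRep_eq_of_mem_ker_toRepresentation hg f.2) x

end FunctionRep

section Codegree

instance normal_charKer {G : Type} [Group G] (χ : FDRep ℂ G) : (charKer χ).Normal :=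
  inferInstanceAs (MonoidHom.ker _).Normal

theorem charKer_eq_ker {G : Type} [Group G] (χ : FDRep ℂ G) :
    charKer χ = MonoidHom.ker (G := G) χ.ρ := by
  ext g
  exact Units.ext_iff

variable {G : Type} [Group G] [Finite G]

theorem finrank_mul_codeg (χ : FDRep ℂ G) [Simple χ] :
    Module.finrank ℂ χ * codeg χ = (charKer χ).index := by
  have := isIrreducible_of_simple χ
  exact Nat.mul_div_cancel' (charKer_eq_ker χ ▸ finrank_dvd_index_ker χ.ρ)

theorem index_charKer_lt {χ ψ : FDRep ℂ G} [Simple χ] [Simple ψ] (h : codeg ψ ≤ codeg χ) {m : ℕ}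
    (hm : Module.finrank ℂ ψ < m * Module.finrank ℂ χ) :
    (charKer ψ).index < m * (charKer χ).index := by
  have hpos : 0 < codeg χ := Nat.pos_of_ne_zero fun h0 ↦
    (charKer χ).index_ne_zero_of_finite (by rw [← finrank_mul_codeg χ, h0, mul_zero])
  calc (charKer ψ).index = Module.finrank ℂ ψ * codeg ψ := (finrank_mul_codeg ψ).symm
    _ ≤ Module.finrank ℂ ψ * codeg χ := Nat.mul_le_mul_left _ h
    _ < m * Module.finrank ℂ χ * codeg χ := Nat.mul_lt_mul_of_pos_right hm hpos
    _ = m * (charKer χ).index := by rw [mul_assoc, finrank_mul_codeg]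

theorem simple_of_isIrreducible {V : Type} [AddCommGroup V] [Module ℂ V] [FiniteDimensional ℂ V]
    (ρ : Representation ℂ G V) [ρ.IsIrreducible] : Simple (FDRep.of ρ) := by
  have := Fintype.ofFinite G
  exact (FDRep.simple_iff_char_is_norm_one _).2 (sum_character_mul_character_inv ρ)

theorem isSupplementSeparated_charKer (χ : FDRep ℂ G) [Simple χ]
    (hmax : ∀ ψ : FDRep ℂ G, Simple ψ → codeg ψ ≤ codeg χ) :
    IsSupplementSeparated (charKer χ) := by
  intro N H hN hNK hNH hH
  have := Fintype.ofFinite (G ⧸ H)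
  have : Nontrivial (G ⧸ H) := QuotientGroup.nontrivial_iff.2 hH
  have := isIrreducible_of_simple χ
  have := nontrivial_of_isIrreducible χ.ρ
  obtain ⟨S, hS0, hS⟩ := exists_isIrreducible_le (zeroSum_ne_bot (ρ := χ.ρ) (X := G ⧸ H))
  have := nontrivial_of_isIrreducible S.toRepresentation
  have hψ := simple_of_isIrreducible S.toRepresentation
  have hker : charKer (FDRep.of S.toRepresentation) = MonoidHom.ker S.toRepresentation :=
    charKer_eq_ker _
  refine ⟨charKer (FDRep.of S.toRepresentation), inferInstance, ?_, fun hLH ↦ ?_, ?_⟩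
  · rw [hker]
    exact not_le_ker_toRepresentation_of_le_zeroSum hS0 (hNK.trans (charKer_eq_ker χ).le)
      (exists_mem_smul_eq_of_sup_eq_top hNH)
  · have hψK : charKer (FDRep.of S.toRepresentation) ≤ charKer χ := by
      rw [hker, charKer_eq_ker]
      refine ker_toRepresentation_le_ker ?_
      rw [← hker, ← Subgroup.normalCore_eq_ker]
      exact Subgroup.normal_le_normalCore.2 hLH
    have hHK : H ⊔ charKer χ = ⊤ :=
      top_le_iff.1 (hNH ▸ sup_le (hNK.trans le_sup_right) le_sup_left)
    refine (index_charKer_lt (hmax _ hψ) (finrank_lt_of_le_zeroSum hS0)).not_ge ?_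
    rw [← Nat.card_eq_fintype_card]
    exact (index_inf_of_sup_eq_top hHK).ge.trans
      (Subgroup.index_antitone (le_inf hLH hψK))
  · rw [hker, Subgroup.normalCore_eq_ker, charKer_eq_ker]
    exact ker_toPermHom_inf_ker_le_ker_toRepresentation S

end Codegree

theorem stmt_10_general {G : Type} [Group G] [Finite G] [Nontrivial G] (χ : FDRep ℂ G)
    [Simple χ] (hmaxcod : ∀ ψ : FDRep ℂ G, Simple ψ → codeg ψ ≤ codeg χ)
    [Group.IsSolvable (G ⧸ charKer χ)] (F : Subgroup G)
    (hF : IsGreatest {N : Subgroup G | N.Normal ∧ Group.IsNilpotent ↥N} F) :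
    charKer χ < F :=
  (isSupplementSeparated_charKer χ hmaxcod).lt_of_isGreatest hF

theorem stmt_10 {G : Type} [Group G] [Finite G] (χ : FDRep ℂ G) (hχ : Simple χ)
    (hmaxcod : ∀ ψ : FDRep ℂ G, Simple ψ → codeg ψ ≤ codeg χ)
    (hnotnilp : ¬ Group.IsNilpotent G) (hsol : IsSolvable G)
    (F : Subgroup G)
    (hF : IsGreatest {N : Subgroup G | N.Normal ∧ Group.IsNilpotent ↥N} F) :
    charKer χ < F := by
  have : Nontrivial G := by
    by_contra hG
    rw [not_nontrivial_iff_subsingleton] at hG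
    exact hnotnilp inferInstance
  have : Group.IsSolvable G := hsol
  exact stmt_10_general χ hmaxcod F hF
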